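/- arXiv:2411.13465 — 2 statements merged into one kernel-verified Lean document; each statement's English description precedes it below -/
import Mathlib

section
/- Let d ≥ 2 and let p be a symmetric probability mass function on ℤ with Σ_{j∈ℤ} j² p(j) < ∞. Fix a child v of the root ρ of the rooted Cayley tree of order d; let T← be the set of vertices whose path from ρ does not pass through v, and T→ the set consisting of v and its descendants (so |W_r ∩ T←| = d^r and |W_r ∩ T→| = d^{r−1} for r ≥ 1). Then the limits ←H := lim_{r→∞} |W_r ∩ T←|^{−1} Σ_{u ∈ W_r ∩ T←} S_u and →H := lim_{r→∞} |W_r ∩ T→|^{−1} Σ_{u ∈ W_r ∩ T→} (S_u − Y_v) exist almost surely and in L², the three random variables ←H, →H, and Y_v are independent, and almost surely H = (d/(d+1)) ←H + (1/(d+1)) →H + (1/(d+1)) Y_v, where H is the almost-sure limit of the spherical averages H_r. -/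
open MeasureTheory ProbabilityTheory Filter Finset Topology

noncomputable section

/-- A non-root vertex of the rooted Cayley tree of order `d`: the first step from the
root is one of `d+1` children, every further step one of `d` children. -/
abbrev Vertex (d : ℕ) : Type := Fin (d + 1) × List (Fin d)

/-- depth of a non-root vertex -/
def vdepth {d : ℕ} (v : Vertex d) : ℕ := v.2.length + 1

/-- the sphere `W_r` of radius `r ≥ 1`: all vertices of depth `r` -/
def sphereW (d r : ℕ) : Finset (Vertex d) :=
  (Finset.univ : Finset (Fin (d + 1) × (Fin (r - 1) → Fin d))).image
    (fun x => (x.1, List.ofFn x.2))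

/-- height at `v`: sum of the increments along the path from the root to `v`
(the prefixes of length `0,…,|v.2|` of the step list of `v` enumerate that path). -/
def heightAt {d : ℕ} {Ω : Type*} (Y : Vertex d → Ω → ℝ) (v : Vertex d) (ω : Ω) : ℝ :=
  ∑ k ∈ Finset.range (v.2.length + 1), Y (v.1, v.2.take k) ω

/-- spherical average `H_r` of the heights at depth `r` -/
def sphAvg (d : ℕ) {Ω : Type*} (Y : Vertex d → Ω → ℝ) (r : ℕ) (ω : Ω) : ℝ :=
  (((d + 1) * d ^ (r - 1) : ℕ) : ℝ)⁻¹ * ∑ v ∈ sphereW d r, heightAt Y v ω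

/-- Blocks of an independent family of σ-algebras indexed by pairwise disjoint sets are
independent. -/
theorem iIndep_biSup_of_pairwise_disjoint {Ω ι κ : Type*} {mΩ : MeasurableSpace Ω}
    {μ : Measure Ω} {m : ι → MeasurableSpace Ω} (hle : ∀ i, m i ≤ mΩ) (hm : iIndep m μ)
    {S : κ → Set ι} (hS : Pairwise fun j k => Disjoint (S j) (S k)) :
    iIndep (fun j => ⨆ i ∈ S j, m i) μ := by
  classical
  have := hm.isProbabilityMeasure
  rw [iIndep_iff]
  intro s
  induction s using Finset.induction_on with
  | empty => simp
  | insert a s ha ih =>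
    intro f hf
    rw [Finset.set_biInter_insert, Finset.prod_insert ha,
      ← ih fun i hi => hf i (Finset.mem_insert_of_mem hi)]
    have hdisj : Disjoint (S a) (⋃ j ∈ s, S j) := by
      simp only [Set.disjoint_iUnion_right]
      rintro j hj
      exact hS (by rintro rfl; exact ha hj)
    refine (Indep_iff _ _ _).1 (indep_iSup_of_disjoint hle hm hdisj) _ _
      (hf a (Finset.mem_insert_self _ _)) (Finset.measurableSet_biInter s fun j hj => ?_)
    have hsub : ⨆ i ∈ S j, m i ≤ ⨆ i ∈ ⋃ j ∈ s, S j, m i :=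
      biSup_mono fun i hi => Set.mem_biUnion hj hi
    exact hsub _ (hf j (Finset.mem_insert_of_mem hj))

/-- A series whose terms have geometrically decaying `Lᵖ` norms converges almost everywhere and
in `Lᵖ`, and the limit may be chosen measurable for any σ-algebra making all terms measurable. -/
theorem exists_measurable_ae_tendsto_tendsto_eLpNorm_of_geometric {Ω : Type*}
    {m mΩ : MeasurableSpace Ω} {μ : Measure Ω} (hle : m ≤ mΩ) {p : ENNReal} (hp : 1 ≤ p)
    {f : ℕ → Ω → ℝ} (hf : ∀ k, Measurable[m] (f k)) {C q : ℝ} (hC : 0 ≤ C) (hq0 : 0 < q)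
    (hq1 : q < 1) (hbound : ∀ k, eLpNorm (f k) p μ ≤ ENNReal.ofReal (C * q ^ k)) :
    ∃ F : Ω → ℝ, Measurable[m] F ∧
      (∀ᵐ ω ∂μ, Tendsto (fun n => ∑ k ∈ range n, f k ω) atTop (𝓝 (F ω))) ∧
      Tendsto (fun n => eLpNorm (fun ω => ∑ k ∈ range n, f k ω - F ω) p μ) atTop (𝓝 0) := by
  set g : ℕ → Ω → ℝ := fun n ω => ∑ k ∈ range n, f k ω with hg
  have hgm : ∀ n, Measurable[m] (g n) := fun n => Finset.measurable_fun_sum _ fun k _ => hf k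
  have hgs : ∀ n, AEStronglyMeasurable (g n) μ :=
    fun n => ((hgm n).mono hle le_rfl).aestronglyMeasurable
  have hfs : ∀ n, AEStronglyMeasurable (f n) μ :=
    fun n => ((hf n).mono hle le_rfl).aestronglyMeasurable
  have h1q : 0 < 1 - q := by linarith
  set B : ℕ → ENNReal := fun N => ENNReal.ofReal ((C + 1) / (1 - q) * q ^ N) with hBdef
  have hB : ∑' i, B i ≠ ⊤ :=
    ((summable_geometric_of_lt_one hq0.le hq1).mul_left _).tsum_ofReal_ne_top
  have hkey : ∀ N n m : ℕ, N ≤ m → m ≤ n → eLpNorm (g n - g m) p μ < B N := by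
    intro N n m hNm hmn
    have hEq : g n - g m = ∑ k ∈ Ico m n, f k := by
      ext ω
      simp [hg, Finset.sum_Ico_eq_sub _ hmn]
    have hgeom : ∑ k ∈ Ico m n, q ^ k ≤ q ^ N / (1 - q) := by
      refine (geom_sum_Ico_le_of_lt_one hq0.le hq1).trans ?_
      exact div_le_div_of_nonneg_right (pow_le_pow_of_le_one hq0.le hq1.le hNm) h1q.le
    calc eLpNorm (g n - g m) p μ ≤ ∑ k ∈ Ico m n, eLpNorm (f k) p μ := by
          rw [hEq]; exact eLpNorm_sum_le (fun k _ => hfs k) hp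
      _ ≤ ∑ k ∈ Ico m n, ENNReal.ofReal (C * q ^ k) := Finset.sum_le_sum fun k _ => hbound k
      _ = ENNReal.ofReal (C * ∑ k ∈ Ico m n, q ^ k) := by
          rw [Finset.mul_sum, ENNReal.ofReal_sum_of_nonneg fun k _ => by positivity]
      _ ≤ ENNReal.ofReal (C * (q ^ N / (1 - q))) :=
          ENNReal.ofReal_le_ofReal (mul_le_mul_of_nonneg_left hgeom hC)
      _ < B N := by
          refine (ENNReal.ofReal_lt_ofReal_iff (by positivity)).2 ?_
          have : 0 < q ^ N / (1 - q) := by positivity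
          calc C * (q ^ N / (1 - q)) < (C + 1) * (q ^ N / (1 - q)) := by nlinarith
            _ = _ := by ring
  have hcau : ∀ N n m : ℕ, N ≤ n → N ≤ m → eLpNorm (g n - g m) p μ < B N := by
    intro N n m hn hm
    rcases le_total m n with h | h
    · exact hkey N n m hm h
    · rw [eLpNorm_sub_comm]; exact hkey N m n hn h
  have hlim : ∀ᵐ ω ∂μ, Tendsto (fun n => g n ω) atTop (𝓝 (limsup (fun n => g n ω) atTop)) := by
    filter_upwards [Lp.ae_tendsto_of_cauchy_eLpNorm hgs hp hB hcau] with ω ⟨l, hl⟩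
    rwa [hl.limsup_eq]
  exact ⟨fun ω => limsup (fun n => g n ω) atTop, Measurable.limsup hgm, hlim,
    Lp.cauchy_tendsto_of_tendsto hgs _ hB hcau hlim⟩

/-- The `L²` norm of a multiple of a sum of pairwise independent centered variables with common
variance. -/
theorem eLpNorm_two_const_mul_sum {Ω ι : Type*} {mΩ : MeasurableSpace Ω} {μ : Measure Ω}
    [IsProbabilityMeasure μ] {X : ι → Ω → ℝ} (hX : ∀ i, MemLp (X i) 2 μ)
    (hmean : ∀ i, ∫ ω, X i ω ∂μ = 0) {V : ℝ} (hvar : ∀ i, variance (X i) μ = V)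
    (hindep : Pairwise fun i j => IndepFun (X i) (X j) μ) (s : Finset ι) (c : ℝ) :
    eLpNorm (fun ω => c * ∑ i ∈ s, X i ω) 2 μ = ENNReal.ofReal (√(c ^ 2 * (#s * V))) := by
  have hsum : MemLp (∑ i ∈ s, X i) 2 μ := memLp_finsetSum' _ fun i _ => hX i
  have hmem : MemLp (fun ω => c * ∑ i ∈ s, X i ω) 2 μ := by
    simpa using hsum.const_mul c
  have hvars : variance (fun ω => c * ∑ i ∈ s, X i ω) μ = c ^ 2 * (#s * V) := by
    rw [variance_const_mul]
    congr 1
    have := IndepFun.variance_sum (μ := μ) (X := X) (s := s) (fun i _ => hX i)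
      (fun i _ j _ hij => hindep hij)
    simp only [hvar, Finset.sum_const, nsmul_eq_mul] at this
    rw [← this]
    congr 1
    ext ω
    simp
  have hzero : ∫ ω, c * ∑ i ∈ s, X i ω ∂μ = 0 := by
    rw [integral_const_mul, integral_finsetSum _ fun i _ => (hX i).integrable one_le_two]
    simp [hmean]
  rw [variance_of_integral_eq_zero hmem.aemeasurable hzero] at hvars
  rw [hmem.eLpNorm_eq_integral_rpow_norm two_ne_zero ENNReal.ofNat_ne_top, ← hvars,
    Real.sqrt_eq_rpow]
  simp [← abs_mul]

/-- Sums over the part of a sphere lying above a set of children of the root. -/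
theorem sum_filter_sphereW {d : ℕ} {M : Type*} [AddCommMonoid M] (n : ℕ)
    (A : Fin (d + 1) → Prop) [DecidablePred A] (g : Vertex d → M) :
    ∑ v ∈ (sphereW d (n + 1)).filter (fun v => A v.1), g v =
      ∑ a with A a, ∑ l : Fin n → Fin d, g (a, List.ofFn l) := by
  have hinj : Function.Injective
      (fun x : Fin (d + 1) × (Fin n → Fin d) => (x.1, List.ofFn x.2)) := by
    rintro ⟨a, l⟩ ⟨b, k⟩ h
    simp only [Prod.mk.injEq] at h
    exact Prod.ext h.1 (List.ofFn_injective h.2)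
  have hW : sphereW d (n + 1) = (Finset.univ : Finset (Fin (d + 1) × (Fin n → Fin d))).image
      (fun x => (x.1, List.ofFn x.2)) := rfl
  rw [hW, Finset.sum_filter, Finset.sum_image hinj.injOn, Fintype.sum_prod_type, Finset.sum_filter]
  refine Finset.sum_congr rfl fun a _ => ?_
  by_cases h : A a <;> simp [h]

theorem card_filter_sphereW {d : ℕ} (n : ℕ) (A : Fin (d + 1) → Prop) [DecidablePred A] :
    #((sphereW d (n + 1)).filter fun v => A v.1) = #{a | A a} * d ^ n := by
  rw [Finset.card_eq_sum_ones, sum_filter_sphereW n A fun _ => 1]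
  simp

/-- Summing a function of the length-`k` prefix over all words of length `n ≥ k`. -/
theorem sum_take_ofFn {d : ℕ} (F : List (Fin d) → ℝ) {k n : ℕ} (hkn : k ≤ n) :
    ∑ l : Fin n → Fin d, F ((List.ofFn l).take k) =
      (d : ℝ) ^ (n - k) * ∑ l : Fin k → Fin d, F (List.ofFn l) := by
  induction n, hkn using Nat.le_induction with
  | base =>
    simp only [Nat.sub_self, pow_zero, one_mul]
    refine Finset.sum_congr rfl fun l _ => ?_
    rw [List.take_of_length_le (by simp)]
  | succ n hkn ih =>
    rw [← (Fin.snocEquiv fun _ : Fin (n + 1) => Fin d).sum_comp, Fintype.sum_prod_type]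
    have hstep : ∀ (x : Fin d) (l : Fin n → Fin d),
        (List.ofFn (Fin.snocEquiv (fun _ : Fin (n + 1) => Fin d) (x, l))).take k =
          (List.ofFn l).take k := by
      intro x l
      rw [List.ofFn_succ', List.concat_eq_append, List.take_append_of_le_length (by simpa)]
      simp [Fin.snocEquiv]
    simp_rw [hstep, ih]
    rw [Finset.sum_const, Finset.card_univ, Fintype.card_fin, nsmul_eq_mul, Nat.succ_sub hkn,
      pow_succ]
    ring

/-- The total height over a part of a sphere, organised by levels. -/
theorem sum_heightAt_filter_sphereW {d : ℕ} {Ω : Type*} (Y : Vertex d → Ω → ℝ) (ω : Ω) (n : ℕ)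
    (A : Fin (d + 1) → Prop) [DecidablePred A] :
    ∑ v ∈ (sphereW d (n + 1)).filter (fun v => A v.1), heightAt Y v ω =
      ∑ k ∈ range (n + 1), (d : ℝ) ^ (n - k) *
        ∑ v ∈ (sphereW d (k + 1)).filter (fun v => A v.1), Y v ω := by
  simp_rw [sum_filter_sphereW, heightAt, List.length_ofFn]
  have h : ∀ a, ∑ l : Fin n → Fin d, ∑ k ∈ range (n + 1), Y (a, (List.ofFn l).take k) ω =
      ∑ k ∈ range (n + 1), (d : ℝ) ^ (n - k) * ∑ l : Fin k → Fin d, Y (a, List.ofFn l) ω := by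
    intro a
    rw [Finset.sum_comm]
    refine Finset.sum_congr rfl fun k hk => ?_
    exact sum_take_ofFn (fun l => Y (a, l) ω) (Nat.lt_succ_iff.1 (Finset.mem_range.1 hk))
  simp_rw [h]
  rw [Finset.sum_comm]
  simp_rw [Finset.mul_sum]

/-- A square-summable integer law gives square-integrable variables. -/
theorem memLp_two_intCast_of_law {Ω : Type*} [MeasurableSpace Ω] {P : Measure Ω}
    {p : ℤ → ℝ} (hmom : Summable fun j : ℤ => (j : ℝ) ^ 2 * p j)
    {X : Ω → ℤ} (hX : Measurable X) (hlaw : ∀ j : ℤ, P {ω | X ω = j} = ENNReal.ofReal (p j)) :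
    MemLp (fun ω => (X ω : ℝ)) 2 P := by
  have hm : Measurable fun ω => (X ω : ℝ) := measurable_from_top.comp hX
  rw [memLp_two_iff_integrable_sq hm.aestronglyMeasurable]
  refine ⟨(hm.pow_const 2).aestronglyMeasurable, ?_⟩
  have : ∫⁻ ω, ‖(X ω : ℝ) ^ 2‖ₑ ∂P = ∑' j : ℤ, ENNReal.ofReal ((j : ℝ) ^ 2 * p j) := by
    rw [← lintegral_map (f := fun j : ℤ => ‖(j : ℝ) ^ 2‖ₑ) measurable_from_top hX,
      lintegral_countable']
    refine tsum_congr fun j => ?_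
    rw [Measure.map_apply hX (measurableSet_singleton j), ENNReal.ofReal_mul (sq_nonneg _),
      ← hlaw j, Real.enorm_eq_ofReal (sq_nonneg _)]
    rfl
  rw [HasFiniteIntegral, this]
  exact hmom.tsum_ofReal_lt_top

/-- Integer variables with the same point masses are identically distributed. -/
theorem identDistrib_of_pointMass_eq {Ω : Type*} [MeasurableSpace Ω] {P : Measure Ω}
    {X X' : Ω → ℤ} (hX : Measurable X) (hX' : Measurable X')
    (h : ∀ j : ℤ, P {ω | X ω = j} = P {ω | X' ω = j}) : IdentDistrib X X' P P := by
  refine ⟨hX.aemeasurable, hX'.aemeasurable, Measure.ext_of_singleton fun j => ?_⟩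
  rw [Measure.map_apply hX (measurableSet_singleton j),
    Measure.map_apply hX' (measurableSet_singleton j)]
  exact h j

/-- An integer variable with symmetric point masses has mean zero. -/
theorem integral_intCast_eq_zero_of_symm {Ω : Type*} [MeasurableSpace Ω] {P : Measure Ω}
    {X : Ω → ℤ} (hX : Measurable X) (h : ∀ j : ℤ, P {ω | X ω = -j} = P {ω | X ω = j}) :
    ∫ ω, (X ω : ℝ) ∂P = 0 := by
  have hid : IdentDistrib X (fun ω => -X ω) P P := by
    refine identDistrib_of_pointMass_eq hX hX.neg fun j => ?_
    rw [← h j]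
    simp_rw [neg_eq_iff_eq_neg]
  have := (hid.comp (u := fun j : ℤ => (j : ℝ)) measurable_from_top).integral_eq
  simp only [Function.comp_apply, Int.cast_neg, integral_neg] at this
  change ∫ ω, (X ω : ℝ) ∂P = _ at this
  linarith

/-- Past/future decomposition of the limit `H` at a child `v₀ = (a₀, [])`
of the root: the backward and forward spherical averages converge a.s. and in `L²` to `←H`
and `→H`, the triple `(←H, →H, Y_{v₀})` is independent, and a.s.
`H = (d/(d+1))·←H + (1/(d+1))·→H + (1/(d+1))·Y_{v₀}`. -/
theorem free_limit_past_future_decomposition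
    {Ω : Type} [MeasurableSpace Ω] (P : Measure Ω) [IsProbabilityMeasure P]
    (d : ℕ) (hd : 2 ≤ d)
    (p : ℤ → ℝ) (hp0 : ∀ j, 0 ≤ p j) (hpsum : Summable p) (hp1 : ∑' j, p j = 1)
    (hsymm : ∀ j, p (-j) = p j)
    (hmom : Summable (fun j : ℤ => (j : ℝ) ^ 2 * p j))
    (Y : Vertex d → Ω → ℤ) (hmeas : ∀ v, Measurable (Y v))
    (hindep : iIndepFun Y P)
    (hlaw : ∀ v (j : ℤ), P {ω | Y v ω = j} = ENNReal.ofReal (p j))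
    (H : Ω → ℝ) (hHmeas : Measurable H)
    (hH : ∀ᵐ ω ∂P, Tendsto (fun r => sphAvg d (fun v ω => (Y v ω : ℝ)) r ω) atTop (𝓝 (H ω)))
    (a₀ : Fin (d + 1)) :
    ∃ HL HR : Ω → ℝ,
      (∀ᵐ ω ∂P, Tendsto (fun r : ℕ =>
          ((d : ℝ) ^ r)⁻¹ * ∑ v ∈ (sphereW d r).filter (fun v => v.1 ≠ a₀),
            heightAt (fun v ω => (Y v ω : ℝ)) v ω)
        atTop (𝓝 (HL ω))) ∧
      Tendsto (fun r : ℕ => eLpNorm (fun ω =>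
          ((d : ℝ) ^ r)⁻¹ * ∑ v ∈ (sphereW d r).filter (fun v => v.1 ≠ a₀),
            heightAt (fun v ω => (Y v ω : ℝ)) v ω - HL ω) 2 P) atTop (𝓝 0) ∧
      (∀ᵐ ω ∂P, Tendsto (fun r : ℕ =>
          ((d : ℝ) ^ (r - 1))⁻¹ * ∑ v ∈ (sphereW d r).filter (fun v => v.1 = a₀),
            (heightAt (fun v ω => (Y v ω : ℝ)) v ω - (Y (a₀, []) ω : ℝ)))
        atTop (𝓝 (HR ω))) ∧
      Tendsto (fun r : ℕ => eLpNorm (fun ω =>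
          ((d : ℝ) ^ (r - 1))⁻¹ * ∑ v ∈ (sphereW d r).filter (fun v => v.1 = a₀),
            (heightAt (fun v ω => (Y v ω : ℝ)) v ω - (Y (a₀, []) ω : ℝ)) - HR ω) 2 P)
        atTop (𝓝 0) ∧
      iIndepFun
        ![HL, HR, fun ω => ((Y (a₀, []) ω : ℤ) : ℝ)] P ∧
      (∀ᵐ ω ∂P, H ω =
        (d : ℝ) / ((d : ℝ) + 1) * HL ω + 1 / ((d : ℝ) + 1) * HR ω
          + 1 / ((d : ℝ) + 1) * (Y (a₀, []) ω : ℝ)) := by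
  classical
  have hd0 : (0 : ℝ) < d := by positivity
  set X : Vertex d → Ω → ℝ := fun v ω => (Y v ω : ℝ) with hXdef
  have hX2 : ∀ v, MemLp (X v) 2 P := fun v => memLp_two_intCast_of_law hmom (hmeas v) (hlaw v)
  have hXmean : ∀ v, ∫ ω, X v ω ∂P = 0 := fun v =>
    integral_intCast_eq_zero_of_symm (hmeas v) fun j => by rw [hlaw, hlaw, hsymm]
  have hXvar : ∀ v, variance (X v) P = variance (X (a₀, [])) P := fun v =>
    ((identDistrib_of_pointMass_eq (hmeas v) (hmeas (a₀, [])) fun j => by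
      rw [hlaw, hlaw]).comp (u := fun j : ℤ => (j : ℝ)) measurable_from_top).variance_eq
  have hXindep : Pairwise fun u v => IndepFun (X u) (X v) P := fun u v huv =>
    (hindep.indepFun huv).comp (φ := fun j : ℤ => (j : ℝ)) (ψ := fun j : ℤ => (j : ℝ))
      measurable_from_top measurable_from_top
  set m : Vertex d → MeasurableSpace Ω := fun v => MeasurableSpace.comap (Y v) inferInstance
  have hmle : ∀ v, m v ≤ ‹MeasurableSpace Ω› := fun v => (hmeas v).comap_le
  set S : Fin 3 → Set (Vertex d) :=
    ![{v | v.1 ≠ a₀}, {v | v.1 = a₀ ∧ v.2 ≠ []}, {(a₀, [])}] with hSdef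
  have hS : Pairwise fun i j => Disjoint (S i) (S j) := by
    intro i j hij
    rw [Set.disjoint_left]
    rintro ⟨a, l⟩
    fin_cases i <;> fin_cases j <;> simp_all
  have hblock := iIndep_biSup_of_pairwise_disjoint hmle hindep.iIndep hS
  have hble : ∀ i, ⨆ v ∈ S i, m v ≤ ‹MeasurableSpace Ω› := fun i => iSup₂_le fun v _ => hmle v
  have hXS : ∀ i, ∀ v ∈ S i, Measurable[⨆ v ∈ S i, m v] (X v) := fun i v hv =>
    (measurable_from_top (f := fun j : ℤ => (j : ℝ))).comp
      ((comap_measurable (Y v)).mono (le_iSup₂_of_le v hv le_rfl) le_rfl)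
  set V : ℝ := variance (X (a₀, [])) P with hV
  have hV0 : 0 ≤ V := variance_nonneg _ _
  set q : ℝ := √((d : ℝ)⁻¹) with hq
  have hqsq : q ^ 2 = (d : ℝ)⁻¹ := Real.sq_sqrt (by positivity)
  have hq0 : 0 < q := by positivity
  have hq1 : q < 1 := by
    rw [hq, Real.sqrt_lt' one_pos, one_pow]
    exact inv_lt_one_of_one_lt₀ (by exact_mod_cast hd)
  have hnorm : ∀ (s : Finset (Vertex d)) (k : ℕ), #s = d ^ (k + 1) →
      eLpNorm (fun ω => ((d : ℝ) ^ (k + 1))⁻¹ * ∑ v ∈ s, X v ω) 2 P ≤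
        ENNReal.ofReal (√V * q * q ^ k) := by
    intro s k hs
    rw [eLpNorm_two_const_mul_sum hX2 hXmean hXvar hXindep, hs]
    have : (((d : ℝ) ^ (k + 1))⁻¹) ^ 2 * (((d ^ (k + 1) : ℕ) : ℝ) * V) =
        (√V * q * q ^ k) ^ 2 := by
      rw [mul_assoc, ← pow_succ', mul_pow, Real.sq_sqrt hV0, ← pow_mul, mul_comm (k + 1) 2,
        pow_mul, hqsq, inv_pow (d : ℝ) (k + 1), Nat.cast_pow]
      field_simp
    rw [this, Real.sqrt_sq (by positivity)]
  have hlen : ∀ (n : ℕ) (v : Vertex d), v ∈ sphereW d (n + 1) → v.2.length = n := by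
    intro n v hv
    obtain ⟨x, -, rfl⟩ := Finset.mem_image.1 hv
    simp
  obtain ⟨HL, hLm, hLae, hLL⟩ := exists_measurable_ae_tendsto_tendsto_eLpNorm_of_geometric
    (hble 0) one_le_two
    (f := fun k ω => ((d : ℝ) ^ (k + 1))⁻¹ *
      ∑ v ∈ (sphereW d (k + 1)).filter (fun v => v.1 ≠ a₀), X v ω)
    (fun k => (Finset.measurable_fun_sum _ fun v hv =>
      hXS 0 v (by simpa [hSdef] using (Finset.mem_filter.1 hv).2)).const_mul _)
    (by positivity) hq0 hq1 (fun k => hnorm _ k (by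
      rw [card_filter_sphereW k fun a => a ≠ a₀, Finset.filter_ne']
      simp [pow_succ']))
  obtain ⟨HR, hRm, hRae, hRL⟩ := exists_measurable_ae_tendsto_tendsto_eLpNorm_of_geometric
    (hble 1) one_le_two
    (f := fun k ω => ((d : ℝ) ^ (k + 1))⁻¹ *
      ∑ v ∈ (sphereW d (k + 1 + 1)).filter (fun v => v.1 = a₀), X v ω)
    (fun k => (Finset.measurable_fun_sum _ fun v hv => hXS 1 v ⟨(Finset.mem_filter.1 hv).2, by
      have := hlen _ v (Finset.mem_filter.1 hv).1
      rintro h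
      simp [h] at this⟩).const_mul _)
    (by positivity) hq0 hq1 (fun k => hnorm _ k (by
      rw [card_filter_sphereW (k + 1) fun a => a = a₀, Finset.filter_eq']
      simp))
  have hseqL : ∀ n ω, ((d : ℝ) ^ (n + 1))⁻¹ *
      ∑ v ∈ (sphereW d (n + 1)).filter (fun v => v.1 ≠ a₀), heightAt X v ω =
      ∑ k ∈ range (n + 1), ((d : ℝ) ^ (k + 1))⁻¹ *
        ∑ v ∈ (sphereW d (k + 1)).filter (fun v => v.1 ≠ a₀), X v ω := by
    intro n ω
    rw [sum_heightAt_filter_sphereW X ω n fun a => a ≠ a₀, Finset.mul_sum]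
    refine Finset.sum_congr rfl fun k hk => ?_
    rw [← mul_assoc, pow_sub₀ _ hd0.ne' (Nat.lt_succ_iff.1 (Finset.mem_range.1 hk))]
    congr 1
    field_simp
    ring
  have hseqR : ∀ n ω, ((d : ℝ) ^ n)⁻¹ *
      ∑ v ∈ (sphereW d (n + 1)).filter (fun v => v.1 = a₀), (heightAt X v ω - X (a₀, []) ω) =
      ∑ k ∈ range n, ((d : ℝ) ^ (k + 1))⁻¹ *
        ∑ v ∈ (sphereW d (k + 1 + 1)).filter (fun v => v.1 = a₀), X v ω := by
    intro n ω
    rw [Finset.sum_sub_distrib, sum_heightAt_filter_sphereW X ω n fun a => a = a₀,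
      Finset.sum_range_succ', Finset.sum_const, card_filter_sphereW n fun a => a = a₀,
      sum_filter_sphereW 0 fun a => a = a₀]
    simp only [Finset.filter_eq', Finset.mem_univ, if_true, Finset.card_singleton, one_mul,
      Finset.sum_singleton, Finset.univ_unique, List.ofFn_zero, nsmul_eq_mul, Nat.cast_pow,
      Nat.sub_zero, add_sub_cancel_right, Finset.mul_sum (range n)]
    refine Finset.sum_congr rfl fun k hk => ?_
    rw [← mul_assoc, pow_sub₀ _ hd0.ne' (Finset.mem_range.1 hk)]
    congr 1
    field_simp
  have hL : ∀ᵐ ω ∂P, Tendsto (fun r : ℕ => ((d : ℝ) ^ r)⁻¹ *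
      ∑ v ∈ (sphereW d r).filter (fun v => v.1 ≠ a₀), heightAt X v ω) atTop (𝓝 (HL ω)) := by
    filter_upwards [hLae] with ω hω
    rw [← tendsto_add_atTop_iff_nat 1]
    simpa only [hseqL] using (tendsto_add_atTop_iff_nat 1).2 hω
  have hR : ∀ᵐ ω ∂P, Tendsto (fun r : ℕ => ((d : ℝ) ^ (r - 1))⁻¹ *
      ∑ v ∈ (sphereW d r).filter (fun v => v.1 = a₀), (heightAt X v ω - X (a₀, []) ω))
      atTop (𝓝 (HR ω)) := by
    filter_upwards [hRae] with ω hω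
    rw [← tendsto_add_atTop_iff_nat 1]
    simpa only [Nat.add_sub_cancel, hseqR] using hω
  refine ⟨HL, HR, hL, ?_, hR, ?_, ?_, ?_⟩
  · rw [← tendsto_add_atTop_iff_nat 1]
    simpa only [hseqL] using (tendsto_add_atTop_iff_nat 1).2 hLL
  · rw [← tendsto_add_atTop_iff_nat 1]
    change Tendsto (fun n => eLpNorm (fun ω => ((d : ℝ) ^ n)⁻¹ *
      ∑ v ∈ (sphereW d (n + 1)).filter (fun v => v.1 = a₀), (heightAt X v ω - X (a₀, []) ω) -
        HR ω) 2 P) atTop (𝓝 0)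
    simpa only [hseqR] using hRL
  · refine iIndep_of_iIndep_of_le hblock fun i => ?_
    fin_cases i
    · exact hLm.comap_le
    · exact hRm.comap_le
    · exact (hXS 2 (a₀, []) rfl).comap_le
  · filter_upwards [hH, hL, hR] with ω hHω hLω hRω
    refine tendsto_nhds_unique hHω (Tendsto.congr' ?_ (((hLω.const_mul ((d : ℝ) / (d + 1))).add
      (hRω.const_mul (1 / ((d : ℝ) + 1)))).add_const (1 / ((d : ℝ) + 1) * X (a₀, []) ω)))
    filter_upwards [eventually_ge_atTop 1] with r hr
    obtain ⟨n, rfl⟩ := Nat.exists_eq_add_of_le' hr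
    rw [sphAvg, ← Finset.sum_filter_add_sum_filter_not (sphereW d (n + 1)) (fun v => v.1 = a₀),
      Finset.sum_sub_distrib, Finset.sum_const, card_filter_sphereW n fun a => a = a₀]
    simp only [Finset.filter_eq', Finset.mem_univ, if_true, Finset.card_singleton, one_mul,
      nsmul_eq_mul, Nat.add_sub_cancel, ne_eq]
    push_cast
    field_simp
    ring
end
end

section
/- Let d ≥ 2 and let (Y_v), indexed by the non-root vertices of the rooted Cayley tree of order d, be independent (not necessarily identically distributed) real-valued random variables with E[Y_v] = 0 and E[Y_v²] ≤ C for all v, where C < ∞. Then the spherical averages (H_r)_{r≥1} form a martingale with respect to the filtration (σ(Y_v : v ∈ B_r, v ≠ ρ))_{r≥1}, satisfy sup_{r≥1} E[H_r²] ≤ C d/(d²−1), and converge almost surely and in L² to an almost surely finite random variable H. -/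
open MeasureTheory ProbabilityTheory Filter Finset Topology

noncomputable section

/-- the σ-algebra generated by the increments in the ball `B_r` -/
def treeSigma (d : ℕ) {Ω : Type*} [MeasurableSpace Ω] {E : Type*} [MeasurableSpace E]
    (Y : Vertex d → Ω → E) (r : ℕ) : MeasurableSpace Ω :=
  ⨆ v ∈ {v : Vertex d | vdepth v ≤ r}, MeasurableSpace.comap (Y v) inferInstance

/-- The vertices `v` whose level `v.2.length` lies in `[m, n)`. -/
def levels (d m n : ℕ) : Finset (Vertex d) :=
  (Finset.Ico m n).biUnion fun k => sphereW d (k + 1)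

/-- The contribution of `Y v` to a spherical average: `Y v` divided by the size of the sphere
through `v`. -/
def weightedIncr {d : ℕ} {Ω : Type*} (Y : Vertex d → Ω → ℝ) (v : Vertex d) (ω : Ω) : ℝ :=
  (((d + 1) * d ^ v.2.length : ℕ) : ℝ)⁻¹ * Y v ω

section Tree

variable {d : ℕ}

lemma length_of_mem_sphereW {n : ℕ} {v : Vertex d} (hv : v ∈ sphereW d (n + 1)) :
    v.2.length = n := by
  simp only [sphereW, Finset.mem_image] at hv
  obtain ⟨x, -, rfl⟩ := hv
  simp

lemma length_mem_Ico_of_mem_levels {m n : ℕ} {v : Vertex d} (hv : v ∈ levels d m n) :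
    v.2.length ∈ Finset.Ico m n := by
  simp only [levels, Finset.mem_biUnion] at hv
  obtain ⟨k, hk, hv⟩ := hv
  rwa [length_of_mem_sphereW hv]

lemma sum_sphereW (n : ℕ) (f : Vertex d → ℝ) :
    ∑ v ∈ sphereW d (n + 1), f v =
      ∑ a : Fin (d + 1), ∑ x : Fin n → Fin d, f (a, List.ofFn x) := by
  rw [sphereW, Finset.sum_image, ← Finset.univ_product_univ, Finset.sum_product]
  · rfl
  · rintro ⟨a, x⟩ - ⟨b, y⟩ - h
    simp only [Prod.mk.injEq] at h
    rw [h.1, List.ofFn_injective h.2]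

lemma sum_sphereW_succ (n : ℕ) (f : Vertex d → ℝ) :
    ∑ v ∈ sphereW d (n + 2), f v =
      ∑ v ∈ sphereW d (n + 1), ∑ i : Fin d, f (v.1, v.2 ++ [i]) := by
  rw [sum_sphereW, sum_sphereW]
  refine Finset.sum_congr rfl fun a _ => ?_
  rw [← (Fin.snocEquiv fun _ => Fin d).sum_comp, ← Finset.univ_product_univ,
    Finset.sum_product_right]
  refine Finset.sum_congr rfl fun x _ => Finset.sum_congr rfl fun i _ => ?_
  rw [List.ofFn_succ_last]
  simp [Fin.snocEquiv]

lemma card_sphereW (n : ℕ) : (#(sphereW d (n + 1)) : ℝ) = (((d + 1) * d ^ n : ℕ) : ℝ) := by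
  have := sum_sphereW (d := d) n fun _ => 1
  simpa using this

lemma sum_levels (m n : ℕ) (f : Vertex d → ℝ) :
    ∑ v ∈ levels d m n, f v = ∑ k ∈ Finset.Ico m n, ∑ v ∈ sphereW d (k + 1), f v := by
  refine Finset.sum_biUnion fun i _ j _ hij => Finset.disjoint_left.2 fun v hi hj => hij ?_
  rw [← length_of_mem_sphereW hi, length_of_mem_sphereW hj]

variable {Ω : Type*} (Y : Vertex d → Ω → ℝ)

lemma heightAt_append_singleton (v : Vertex d) (i : Fin d) (ω : Ω) :
    heightAt Y (v.1, v.2 ++ [i]) ω = heightAt Y v ω + Y (v.1, v.2 ++ [i]) ω := by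
  simp only [heightAt, List.length_append, List.length_singleton]
  rw [Finset.sum_range_succ _ (v.2.length + 1)]
  congr 1
  · refine Finset.sum_congr rfl fun k hk => ?_
    rw [List.take_append_of_le_length (Nat.lt_succ_iff.1 (Finset.mem_range.1 hk))]
  · rw [List.take_of_length_le (by simp)]

lemma sum_sphereW_weightedIncr (n : ℕ) (ω : Ω) :
    ∑ v ∈ sphereW d (n + 1), weightedIncr Y v ω =
      (((d + 1) * d ^ n : ℕ) : ℝ)⁻¹ * ∑ v ∈ sphereW d (n + 1), Y v ω := by
  rw [Finset.mul_sum]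
  refine Finset.sum_congr rfl fun v hv => ?_
  rw [weightedIncr, length_of_mem_sphereW hv]

lemma sphAvg_add_two (hd : d ≠ 0) (n : ℕ) (ω : Ω) :
    sphAvg d Y (n + 2) ω =
      sphAvg d Y (n + 1) ω + ∑ v ∈ sphereW d (n + 2), weightedIncr Y v ω := by
  rw [sum_sphereW_weightedIncr, sphAvg, sphAvg, sum_sphereW_succ, sum_sphereW_succ]
  simp only [heightAt_append_singleton, Finset.sum_add_distrib, Finset.sum_const,
    Finset.card_univ, Fintype.card_fin, nsmul_eq_mul, ← Finset.mul_sum, Nat.add_sub_cancel,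
    Nat.add_succ_sub_one]
  have : (d : ℝ) ≠ 0 := Nat.cast_ne_zero.2 hd
  push_cast
  field_simp
  ring

lemma sphAvg_succ_eq_sum_levels (hd : d ≠ 0) (n : ℕ) (ω : Ω) :
    sphAvg d Y (n + 1) ω = ∑ v ∈ levels d 0 (n + 1), weightedIncr Y v ω := by
  induction n with
  | zero =>
    rw [sum_levels, Nat.Ico_succ_singleton, Finset.sum_singleton, sum_sphereW_weightedIncr, sphAvg]
    congr 1
    refine Finset.sum_congr rfl fun v hv => ?_
    have hnil : v.2 = [] := List.length_eq_zero_iff.1 (length_of_mem_sphereW hv)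
    obtain ⟨a, l⟩ := v
    obtain rfl : l = [] := hnil
    simp [heightAt]
  | succ n ih =>
    rw [sphAvg_add_two Y hd, ih, sum_levels, sum_levels,
      Finset.sum_Ico_succ_top (Nat.zero_le (n + 1))]

lemma sphAvg_sub_sphAvg (hd : d ≠ 0) {m n : ℕ} (hmn : m ≤ n) (ω : Ω) :
    sphAvg d Y (n + 1) ω - sphAvg d Y (m + 1) ω =
      ∑ v ∈ levels d (m + 1) (n + 1), weightedIncr Y v ω := by
  rw [sphAvg_succ_eq_sum_levels Y hd, sphAvg_succ_eq_sum_levels Y hd]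
  simp only [sum_levels]
  rw [← Finset.sum_Ico_consecutive _ (Nat.zero_le (m + 1)) (Nat.succ_le_succ hmn),
    add_sub_cancel_left]

lemma stronglyMeasurable_sum_weightedIncr {S : Set (Vertex d)} {s : Finset (Vertex d)}
    (hs : ∀ v ∈ s, v ∈ S) :
    StronglyMeasurable[⨆ v ∈ S, MeasurableSpace.comap (Y v) inferInstance]
      fun ω => ∑ v ∈ s, weightedIncr Y v ω := by
  refine (Finset.measurable_fun_sum s fun v hv => ?_).stronglyMeasurable
  have hY : Measurable[⨆ v ∈ S, MeasurableSpace.comap (Y v) inferInstance] (Y v) :=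
    (comap_measurable (Y v)).mono (le_iSup₂_of_le v (hs v hv) le_rfl) le_rfl
  exact hY.const_mul _

end Tree

section Probability

variable {d : ℕ} {Ω : Type*} [MeasurableSpace Ω] {P : Measure Ω} {Y : Vertex d → Ω → ℝ}

lemma memLp_weightedIncr (hL2 : ∀ v, MemLp (Y v) 2 P) (v : Vertex d) :
    MemLp (weightedIncr Y v) 2 P :=
  (hL2 v).const_mul _

lemma memLp_sum_weightedIncr (hL2 : ∀ v, MemLp (Y v) 2 P) (s : Finset (Vertex d)) :
    MemLp (fun ω => ∑ v ∈ s, weightedIncr Y v ω) 2 P :=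
  memLp_finsetSum s fun v _ => memLp_weightedIncr hL2 v

lemma memLp_sphAvg_succ (hd : d ≠ 0) (hL2 : ∀ v, MemLp (Y v) 2 P) (n : ℕ) :
    MemLp (sphAvg d Y (n + 1)) 2 P := by
  rw [funext (sphAvg_succ_eq_sum_levels Y hd n)]
  exact memLp_sum_weightedIncr hL2 _

lemma integral_sum_weightedIncr [IsFiniteMeasure P] (hL2 : ∀ v, MemLp (Y v) 2 P)
    (hmean : ∀ v, ∫ ω, Y v ω ∂P = 0) (s : Finset (Vertex d)) :
    ∫ ω, ∑ v ∈ s, weightedIncr Y v ω ∂P = 0 := by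
  rw [integral_finsetSum s fun v _ => (memLp_weightedIncr hL2 v).integrable one_le_two]
  simp [weightedIncr, integral_const_mul, hmean]

lemma integral_sq_sum_weightedIncr [IsProbabilityMeasure P]
    (hindep : iIndepFun Y P) (hL2 : ∀ v, MemLp (Y v) 2 P) (hmean : ∀ v, ∫ ω, Y v ω ∂P = 0)
    (s : Finset (Vertex d)) :
    ∫ ω, (∑ v ∈ s, weightedIncr Y v ω) ^ 2 ∂P =
      ∑ v ∈ s, (((d + 1) * d ^ v.2.length : ℕ) : ℝ)⁻¹ ^ 2 * ∫ ω, Y v ω ^ 2 ∂P := by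
  have hvar := IndepFun.variance_sum (X := fun v => weightedIncr Y v) (s := s)
    (fun v _ => memLp_weightedIncr hL2 v) fun u _ v _ huv =>
      (hindep.indepFun huv).comp (measurable_const_mul _) (measurable_const_mul _)
  have hsum : (∑ v ∈ s, weightedIncr Y v) = fun ω => ∑ v ∈ s, weightedIncr Y v ω := by
    ext ω
    simp
  rw [hsum, variance_of_integral_eq_zero (memLp_sum_weightedIncr hL2 s).aemeasurable
    (integral_sum_weightedIncr hL2 hmean s)] at hvar
  rw [hvar]
  refine Finset.sum_congr rfl fun v _ => ?_
  rw [← variance_of_integral_eq_zero (hL2 v).aemeasurable (hmean v)]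
  exact variance_const_mul _ _ _

lemma integral_sq_sum_levels_le [IsProbabilityMeasure P] (hd : 2 ≤ d)
    (hindep : iIndepFun Y P) (hL2 : ∀ v, MemLp (Y v) 2 P) (hmean : ∀ v, ∫ ω, Y v ω ∂P = 0)
    {C : ℝ} (hvar : ∀ v, ∫ ω, Y v ω ^ 2 ∂P ≤ C) (m n : ℕ) :
    ∫ ω, (∑ v ∈ levels d m n, weightedIncr Y v ω) ^ 2 ∂P ≤
      C * d / ((d : ℝ) ^ 2 - 1) * (d : ℝ)⁻¹ ^ m := by
  have hd2 : (2 : ℝ) ≤ d := by exact_mod_cast hd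
  have hd0 : (0 : ℝ) < d := by linarith
  have hC : 0 ≤ C := (integral_nonneg fun ω => sq_nonneg (Y (0, []) ω)).trans (hvar _)
  rw [integral_sq_sum_weightedIncr hindep hL2 hmean, sum_levels]
  calc
    _ ≤ ∑ k ∈ Finset.Ico m n, C / (d + 1) * (d : ℝ)⁻¹ ^ k := by
      refine Finset.sum_le_sum fun k _ => ?_
      calc
        _ ≤ ∑ v ∈ sphereW d (k + 1), (((d + 1) * d ^ k : ℕ) : ℝ)⁻¹ ^ 2 * C := by
          refine Finset.sum_le_sum fun v hv => ?_
          rw [length_of_mem_sphereW hv]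
          exact mul_le_mul_of_nonneg_left (hvar v) (sq_nonneg _)
        _ = C / (d + 1) * (d : ℝ)⁻¹ ^ k := by
          rw [Finset.sum_const, nsmul_eq_mul, card_sphereW]
          push_cast
          rw [inv_pow (d : ℝ) k]
          field_simp
    _ ≤ C / (d + 1) * ((d : ℝ)⁻¹ ^ m / (1 - (d : ℝ)⁻¹)) := by
      rw [← Finset.mul_sum]
      exact mul_le_mul_of_nonneg_left (geom_sum_Ico_le_of_lt_one (by positivity)
        (inv_lt_one_of_one_lt₀ (by linarith))) (by positivity)
    _ = _ := by
      have h1 : (d : ℝ) - 1 ≠ 0 := by linarith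
      have h2 : (d : ℝ) + 1 ≠ 0 := by linarith
      have h3 : (d : ℝ) ^ 2 - 1 = (d - 1) * (d + 1) := by ring
      have h4 : 1 - (d : ℝ)⁻¹ = (d - 1) / d := by field_simp
      rw [h3, h4]
      field_simp

lemma eLpNorm_two_le_ofReal_sqrt {f : Ω → ℝ} (hf : MemLp f 2 P) {b : ℝ}
    (hb : ∫ ω, f ω ^ 2 ∂P ≤ b) : eLpNorm f 2 P ≤ ENNReal.ofReal √b := by
  rw [hf.eLpNorm_eq_integral_rpow_norm two_ne_zero ENNReal.ofNat_ne_top]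
  refine ENNReal.ofReal_le_ofReal ?_
  simp only [ENNReal.toReal_ofNat, Real.rpow_two, Real.norm_eq_abs, sq_abs]
  rw [Real.sqrt_eq_rpow, one_div]
  exact Real.rpow_le_rpow (integral_nonneg fun ω => sq_nonneg _) hb (by norm_num)

lemma eLpNorm_sphAvg_sub_lt [IsProbabilityMeasure P] (hd : 2 ≤ d)
    (hindep : iIndepFun Y P) (hL2 : ∀ v, MemLp (Y v) 2 P) (hmean : ∀ v, ∫ ω, Y v ω ∂P = 0)
    {C : ℝ} (hvar : ∀ v, ∫ ω, Y v ω ^ 2 ∂P ≤ C) {N m n : ℕ} (hNm : N ≤ m) (hmn : m ≤ n) :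
    eLpNorm (sphAvg d Y (n + 1) - sphAvg d Y (m + 1)) 2 P <
      ENNReal.ofReal (√(C * d / ((d : ℝ) ^ 2 - 1) + 1) * √(d : ℝ)⁻¹ ^ N) := by
  have hd2 : (2 : ℝ) ≤ d := by exact_mod_cast hd
  have hd0 : d ≠ 0 := by lia
  have hC : 0 ≤ C := (integral_nonneg fun ω => sq_nonneg (Y (0, []) ω)).trans (hvar _)
  have hK : 0 ≤ C * d / ((d : ℝ) ^ 2 - 1) := div_nonneg (by positivity) (by nlinarith)
  have hq : (0 : ℝ) < (d : ℝ)⁻¹ := inv_pos.2 (by linarith)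
  have heq : sphAvg d Y (n + 1) - sphAvg d Y (m + 1) =
      fun ω => ∑ v ∈ levels d (m + 1) (n + 1), weightedIncr Y v ω :=
    funext fun ω => sphAvg_sub_sphAvg Y hd0 hmn ω
  have hsqrt : √((d : ℝ)⁻¹ ^ (m + 1)) = √(d : ℝ)⁻¹ ^ (m + 1) := by
    rw [Real.sqrt_eq_iff_mul_self_eq (by positivity) (by positivity), ← mul_pow,
      Real.mul_self_sqrt hq.le]
  rw [heq]
  refine (eLpNorm_two_le_ofReal_sqrt (memLp_sum_weightedIncr hL2 _)
    (integral_sq_sum_levels_le hd hindep hL2 hmean hvar _ _)).trans_lt ?_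
  rw [ENNReal.ofReal_lt_ofReal_iff (by positivity), Real.sqrt_mul hK, hsqrt]
  have h1 : √(d : ℝ)⁻¹ ^ (m + 1) ≤ √(d : ℝ)⁻¹ ^ N :=
    pow_le_pow_of_le_one (Real.sqrt_nonneg _)
      (Real.sqrt_le_one.2 (inv_le_one_of_one_le₀ (by linarith))) (by lia)
  exact mul_lt_mul (Real.sqrt_lt_sqrt hK (by linarith)) h1 (by positivity) (by positivity)

lemma exists_limit_sphAvg [IsProbabilityMeasure P] (hd : 2 ≤ d)
    (hindep : iIndepFun Y P) (hL2 : ∀ v, MemLp (Y v) 2 P) (hmean : ∀ v, ∫ ω, Y v ω ∂P = 0)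
    {C : ℝ} (hvar : ∀ v, ∫ ω, Y v ω ^ 2 ∂P ≤ C) :
    ∃ H : Ω → ℝ, MemLp H 2 P ∧
      (∀ᵐ ω ∂P, Tendsto (fun r => sphAvg d Y r ω) atTop (𝓝 (H ω))) ∧
      Tendsto (fun r => eLpNorm (fun ω => sphAvg d Y r ω - H ω) 2 P) atTop (𝓝 0) := by
  have hmem := memLp_sphAvg_succ (P := P) (d := d) (by lia) hL2
  have hmeas : ∀ n, AEStronglyMeasurable (sphAvg d Y (n + 1)) P := fun n => (hmem n).1
  have hcau : ∀ N n m : ℕ, N ≤ n → N ≤ m →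
      eLpNorm (sphAvg d Y (n + 1) - sphAvg d Y (m + 1)) 2 P <
        ENNReal.ofReal (√(C * d / ((d : ℝ) ^ 2 - 1) + 1) * √(d : ℝ)⁻¹ ^ N) := by
    intro N n m hn hm
    rcases le_total m n with hmn | hnm
    · exact eLpNorm_sphAvg_sub_lt hd hindep hL2 hmean hvar hm hmn
    · rw [eLpNorm_sub_comm]
      exact eLpNorm_sphAvg_sub_lt hd hindep hL2 hmean hvar hn hnm
  have hq : √(d : ℝ)⁻¹ < 1 := by
    rw [Real.sqrt_lt' one_pos, one_pow]
    exact inv_lt_one_of_one_lt₀ (by exact_mod_cast hd)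
  have hB := ((summable_geometric_of_lt_one (Real.sqrt_nonneg (d : ℝ)⁻¹) hq).mul_left
    √(C * d / ((d : ℝ) ^ 2 - 1) + 1)).tsum_ofReal_ne_top
  obtain ⟨H, hHmeas, hlim⟩ := exists_stronglyMeasurable_limit_of_tendsto_ae hmeas
    (Lp.ae_tendsto_of_cauchy_eLpNorm hmeas one_le_two hB hcau)
  have hlim2 := Lp.cauchy_tendsto_of_tendsto hmeas H hB hcau hlim
  refine ⟨H, Lp.memLp_of_cauchy_tendsto one_le_two hmem H hHmeas.aestronglyMeasurable hlim2,
    ?_, (tendsto_add_atTop_iff_nat 1).1 hlim2⟩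
  filter_upwards [hlim] with ω hω
  exact (tendsto_add_atTop_iff_nat 1).1 hω

lemma treeSigma_le (hmeas : ∀ v, Measurable (Y v)) (r : ℕ) :
    treeSigma d Y r ≤ ‹MeasurableSpace Ω› :=
  iSup₂_le fun v _ => (hmeas v).comap_le

lemma condExp_sphAvg_succ [IsProbabilityMeasure P] (hd : d ≠ 0) (hmeas : ∀ v, Measurable (Y v))
    (hindep : iIndepFun Y P) (hL2 : ∀ v, MemLp (Y v) 2 P) (hmean : ∀ v, ∫ ω, Y v ω ∂P = 0)
    (n : ℕ) :
    P[sphAvg d Y (n + 2) | treeSigma d Y (n + 1)] =ᵐ[P] sphAvg d Y (n + 1) := by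
  have hle := treeSigma_le hmeas (n + 1)
  have hadapted : StronglyMeasurable[treeSigma d Y (n + 1)] (sphAvg d Y (n + 1)) := by
    rw [funext (sphAvg_succ_eq_sum_levels Y hd n)]
    refine stronglyMeasurable_sum_weightedIncr Y fun v hv => ?_
    have := Finset.mem_Ico.1 (length_mem_Ico_of_mem_levels hv)
    simp only [Set.mem_ofPred_eq, vdepth]
    lia
  have hindep_future : Indep
      (⨆ v ∈ {v : Vertex d | n + 1 < vdepth v}, MeasurableSpace.comap (Y v) inferInstance)
      (treeSigma d Y (n + 1)) P :=
    indep_iSup_of_disjoint (fun v => (hmeas v).comap_le) hindep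
      (Set.disjoint_left.2 fun v hv hle => by
        simp only [Set.mem_ofPred_eq] at hv hle
        lia)
  have hfuture := condExp_indep_eq (iSup₂_le fun v _ => (hmeas v).comap_le) hle
    (stronglyMeasurable_sum_weightedIncr Y (S := {v : Vertex d | n + 1 < vdepth v})
      (s := sphereW d (n + 2)) fun v hv => by
        simp only [Set.mem_ofPred_eq, vdepth]
        have := length_of_mem_sphereW hv
        lia) hindep_future
  rw [integral_sum_weightedIncr hL2 hmean] at hfuture
  have hint := (memLp_sphAvg_succ hd hL2 n).integrable one_le_two
  have hsplit : sphAvg d Y (n + 2) =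
      sphAvg d Y (n + 1) + fun ω => ∑ v ∈ sphereW d (n + 2), weightedIncr Y v ω :=
    funext fun ω => sphAvg_add_two Y hd n ω
  rw [hsplit]
  refine (condExp_add hint ((memLp_sum_weightedIncr hL2 _).integrable one_le_two) _).trans ?_
  rw [condExp_of_stronglyMeasurable hle hadapted hint]
  filter_upwards [hfuture] with ω hω
  rw [Pi.add_apply, hω, add_zero]

end Probability

/-- For independent centered increments with uniformly bounded second
moments, the spherical averages form a martingale with `sup_r E[H_r²] ≤ Cd/(d²-1)`,
converging a.s. and in `L²` to an a.s. finite limit `H`. -/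
theorem independent_increments_martingale_and_convergence
    {Ω : Type} [MeasurableSpace Ω] (P : Measure Ω) [IsProbabilityMeasure P]
    (d : ℕ) (hd : 2 ≤ d)
    (Y : Vertex d → Ω → ℝ) (hmeas : ∀ v, Measurable (Y v))
    (hindep : iIndepFun Y P)
    (hL2 : ∀ v, MemLp (Y v) 2 P)
    (hmean : ∀ v, ∫ ω, Y v ω ∂P = 0)
    (C : ℝ) (hvar : ∀ v, ∫ ω, (Y v ω) ^ 2 ∂P ≤ C) :
    (∀ r, 1 ≤ r →
      P[ sphAvg d Y (r + 1) | treeSigma d Y r ] =ᵐ[P] sphAvg d Y r) ∧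
    (∀ r, 1 ≤ r →
      ∫ ω, (sphAvg d Y r ω) ^ 2 ∂P ≤ C * (d : ℝ) / ((d : ℝ) ^ 2 - 1)) ∧
    (∃ H : Ω → ℝ, MemLp H 2 P ∧
      (∀ᵐ ω ∂P, Tendsto (fun r => sphAvg d Y r ω) atTop (𝓝 (H ω))) ∧
      Tendsto (fun r => eLpNorm (fun ω => sphAvg d Y r ω - H ω) 2 P) atTop (𝓝 0)) := by
  refine ⟨fun r hr => ?_, fun r hr => ?_, exists_limit_sphAvg hd hindep hL2 hmean hvar⟩
  · obtain ⟨n, rfl⟩ := Nat.exists_eq_add_of_le' hr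
    exact condExp_sphAvg_succ (by lia) hmeas hindep hL2 hmean n
  · obtain ⟨n, rfl⟩ := Nat.exists_eq_add_of_le' hr
    simp only [sphAvg_succ_eq_sum_levels Y (show d ≠ 0 by lia)]
    simpa using integral_sq_sum_levels_le hd hindep hL2 hmean hvar 0 (n + 1)
end
end
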